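/- arXiv:2511.02338 — 5 statements merged into one kernel-verified Lean document; each statement's English description precedes it below -/
import Mathlib

section
/- Let t ≥ 0, 0 ≤ λ ≤ 1, and let h = h(z) belong to H¹_{μ_λ}(ℝ₊), i.e. both ‖h‖_{L²_{μ_λ}} and ‖∂_z h‖_{L²_{μ_λ}} are finite. Then λ^{1/2}/(√2 (1+t)^{1/2}) · ‖h‖_{L²_{μ_λ}} ≤ ‖∂_z h‖_{L²_{μ_λ}}. -/
open MeasureTheory Set

noncomputable section

/-- The Gaussian weight `μ_λ(t,z) = exp(λz²/(4(1+t)))`. -/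
def mu (lam t z : ℝ) : ℝ := Real.exp (lam * z ^ 2 / (4 * (1 + t)))

/-- The squared weighted norm `‖h‖²_{L²_{μ_λ}} = ∫₀^∞ μ_λ(t,z) h(z)² dz`. -/
def L2muSq (lam t : ℝ) (h : ℝ → ℝ) : ENNReal :=
  ∫⁻ z in Set.Ioi (0 : ℝ), ENNReal.ofReal (mu lam t z * h z ^ 2)

/-!
Put `w = exp ψ` with `ψ z = a z²`. Integrating `(ψ' w h²)'` over `[c, R]` and completing the square
in `w (h' + ψ' h)² ≥ 0` gives `∫ w ψ'' h² ≤ ∫ w h'² + [ψ' w h²]`, where `ψ'' = 2a`. The boundary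
term at `R` is `2a` times `R w(R) h(R)²`; since `w h²` is integrable and `1 / R` is not, it vanishes
along some `R → ∞`.
-/

open Filter Topology

section Calculus

theorem absolutelyContinuousOnInterval_of_intervalIntegrable_deriv {f : ℝ → ℝ} {a b : ℝ}
    (hf : ∀ x ∈ uIcc a b, DifferentiableAt ℝ f x) (hf' : IntervalIntegrable (deriv f) volume a b) :
    AbsolutelyContinuousOnInterval f a b := by
  have integral_eq : ∀ x ∈ uIcc a b, ∫ y in a..x, deriv f y = f x - f a := fun x hx =>
    have hsub : uIcc a x ⊆ uIcc a b := uIcc_subset_uIcc_left hx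
    intervalIntegral.integral_deriv_eq_sub (fun y hy => hf y (hsub hy)) (hf'.mono_set hsub)
  refine Tendsto.congr' ?_
    (hf'.absolutelyContinuousOnInterval_intervalIntegral (c := a) left_mem_uIcc)
  filter_upwards [mem_inf_of_right (mem_principal_self _)] with E hE
  refine Finset.sum_congr rfl fun i hi => ?_
  rw [integral_eq _ (hE.1 i hi).1, integral_eq _ (hE.1 i hi).2, dist_sub_right]

theorem aestronglyMeasurable_of_absolutelyContinuousOnInterval {f : ℝ → ℝ} {c : ℝ}
    (hac : ∀ R > c, AbsolutelyContinuousOnInterval f c R) :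
    AEStronglyMeasurable f (volume.restrict (Ioi c)) := by
  refine ContinuousOn.aestronglyMeasurable (fun z hz => ?_) measurableSet_Ioi
  have hz' : z < z + 1 := lt_add_one z
  have hcz : c < z := hz
  exact ((hac (z + 1) (hcz.trans hz')).continuousOn.continuousAt
    (uIcc_of_le (hcz.trans hz').le ▸ Icc_mem_nhds hcz hz')).continuousWithinAt

theorem mapClusterPt_zero_smul_of_integrableOn_Ioi {E : Type*} [NormedAddCommGroup E]
    [NormedSpace ℝ E] {f : ℝ → E} {c : ℝ} (hf : IntegrableOn f (Ioi c)) :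
    MapClusterPt 0 atTop fun x : ℝ => x • f x := by
  rw [Metric.nhds_basis_ball.mapClusterPt_iff_frequently]
  intro ε hε hfar
  obtain ⟨R, hR⟩ := (hfar.and (eventually_ge_atTop (max c 1))).exists_forall_of_atTop
  have hcR : max c 1 ≤ R := (hR R le_rfl).2
  have inv_le : ∀ x ∈ Ioi R, ‖x⁻¹‖ ≤ ε⁻¹ * ‖f x‖ := fun x hx => by
    have hx0 : 0 < x := zero_lt_one.trans_le ((le_max_right c 1).trans (hcR.trans (le_of_lt hx)))
    have hε_le : ε ≤ x * ‖f x‖ := by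
      simpa [norm_smul, abs_of_pos hx0] using (hR x (le_of_lt hx)).1
    rw [Real.norm_of_nonneg (inv_nonneg.2 hx0.le)]
    field_simp
    exact hε_le
  have hf_tail : IntegrableOn f (Ioi R) :=
    hf.mono_set (Ioi_subset_Ioi ((le_max_left c 1).trans hcR))
  exact not_integrableOn_Ioi_inv <| (hf_tail.norm.const_mul ε⁻¹).mono'
    measurable_inv.aestronglyMeasurable ((ae_restrict_iff' measurableSet_Ioi).2 (.of_forall inv_le))

end Calculus

section WeightedPoincare

variable {h : ℝ → ℝ} {c : ℝ}

theorem exp_mul_sq_sub_le_deriv {ψ ψ' : ℝ → ℝ} {ψ'' z : ℝ} (hψ : HasDerivAt ψ (ψ' z) z)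
    (hψ' : HasDerivAt ψ' ψ'' z) (hh : DifferentiableAt ℝ h z) :
    Real.exp (ψ z) * ψ'' * h z ^ 2 - Real.exp (ψ z) * deriv h z ^ 2 ≤
      deriv (fun x => ψ' x * Real.exp (ψ x) * h x ^ 2) z := by
  have hderiv := ((hψ'.fun_mul hψ.exp).fun_mul (hh.hasDerivAt.fun_pow 2)).deriv
  have hsquare : 0 ≤ Real.exp (ψ z) * (deriv h z + ψ' z * h z) ^ 2 := by positivity
  rw [hderiv]
  linear_combination hsquare

theorem absolutelyContinuousOnInterval_mul_exp_mul_sq {ψ φ : ℝ → ℝ} {b : ℝ}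
    (hψ : ContDiff ℝ 1 ψ) (hφ : ContDiff ℝ 1 φ) (hac : AbsolutelyContinuousOnInterval h c b) :
    AbsolutelyContinuousOnInterval (fun z => φ z * Real.exp (ψ z) * h z ^ 2) c b := by
  simp only [sq]
  exact (hφ.mul hψ.exp).contDiffOn.absolutelyContinuousOnInterval.fun_mul (hac.fun_mul hac)

theorem intervalIntegral_exp_mul_sq_le {ψ ψ' ψ'' : ℝ → ℝ} {b : ℝ} (hcb : c ≤ b)
    (hψ : ∀ z, HasDerivAt ψ (ψ' z) z) (hψ' : ∀ z, HasDerivAt ψ' (ψ'' z) z) (hψ'' : Continuous ψ'')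
    (hac : AbsolutelyContinuousOnInterval h c b)
    (hint : IntervalIntegrable (fun z => Real.exp (ψ z) * deriv h z ^ 2) volume c b) :
    (∫ z in c..b, Real.exp (ψ z) * ψ'' z * h z ^ 2) + ψ' c * Real.exp (ψ c) * h c ^ 2 ≤
      (∫ z in c..b, Real.exp (ψ z) * deriv h z ^ 2) + ψ' b * Real.exp (ψ b) * h b ^ 2 := by
  have hψ'_smooth : ContDiff ℝ 1 ψ' :=
    contDiff_one_iff_deriv.2 ⟨fun z => (hψ' z).differentiableAt, by rwa [deriv_eq hψ']⟩
  have hψ_smooth : ContDiff ℝ 1 ψ :=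
    contDiff_one_iff_deriv.2
      ⟨fun z => (hψ z).differentiableAt, by rw [deriv_eq hψ]; exact hψ'_smooth.continuous⟩
  have hflux := absolutelyContinuousOnInterval_mul_exp_mul_sq hψ_smooth hψ'_smooth hac
  have hweight : Continuous fun z => Real.exp (ψ z) * ψ'' z :=
    hψ_smooth.continuous.rexp.mul hψ''
  have hint' : IntervalIntegrable (fun z => Real.exp (ψ z) * ψ'' z * h z ^ 2) volume c b :=
    (hweight.continuousOn.mul (hac.continuousOn.pow 2)).intervalIntegrable
  have hmono := intervalIntegral.integral_mono_ae_restrict hcb (hint'.sub hint)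
    hflux.intervalIntegrable_deriv <| by
      rw [EventuallyLE, ae_restrict_iff' measurableSet_Icc]
      filter_upwards [hac.ae_differentiableAt] with z hz hz_mem
      exact exp_mul_sq_sub_le_deriv (hψ z) (hψ' z) (hz (Icc_subset_uIcc hz_mem))
  rw [intervalIntegral.integral_sub hint' hint, hflux.integral_deriv_eq_sub] at hmono
  linarith

theorem intervalIntegral_exp_const_mul_sq_mul_sq_le (a : ℝ) {b : ℝ} (hcb : c ≤ b)
    (hac : AbsolutelyContinuousOnInterval h c b)
    (hint : IntervalIntegrable (fun z => Real.exp (a * z ^ 2) * deriv h z ^ 2) volume c b) :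
    2 * a * (∫ z in c..b, Real.exp (a * z ^ 2) * h z ^ 2) +
        2 * a * (c * (Real.exp (a * c ^ 2) * h c ^ 2)) ≤
      (∫ z in c..b, Real.exp (a * z ^ 2) * deriv h z ^ 2) +
        2 * a * (b * (Real.exp (a * b ^ 2) * h b ^ 2)) := by
  have hψ : ∀ z, HasDerivAt (fun z => a * z ^ 2) (2 * a * z) z := fun z => by
    simpa [mul_assoc, mul_left_comm] using (hasDerivAt_pow 2 z).const_mul a
  have hψ' : ∀ z, HasDerivAt (fun z => 2 * a * z) (2 * a) z := fun z => by
    simpa using (hasDerivAt_id z).const_mul (2 * a)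
  have hle := intervalIntegral_exp_mul_sq_le hcb hψ hψ' continuous_const hac hint
  simp_rw [mul_right_comm _ (2 * a), intervalIntegral.integral_mul_const] at hle
  linarith

theorem integral_Ioi_exp_const_mul_sq_mul_sq_le (a : ℝ)
    (hac : ∀ R > c, AbsolutelyContinuousOnInterval h c R)
    (hint : IntegrableOn (fun z => Real.exp (a * z ^ 2) * h z ^ 2) (Ioi c))
    (hint' : IntegrableOn (fun z => Real.exp (a * z ^ 2) * deriv h z ^ 2) (Ioi c)) :
    2 * a * (∫ z in Ioi c, Real.exp (a * z ^ 2) * h z ^ 2) +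
        2 * a * (c * (Real.exp (a * c ^ 2) * h c ^ 2)) ≤
      ∫ z in Ioi c, Real.exp (a * z ^ 2) * deriv h z ^ 2 := by
  obtain ⟨U, hU, hboundary⟩ :=
    mapClusterPt_iff_ultrafilter.1 (mapClusterPt_zero_smul_of_integrableOn_Ioi hint)
  have hlim := (intervalIntegral_tendsto_integral_Ioi c hint tendsto_id).mono_left hU
  have hlim' := (intervalIntegral_tendsto_integral_Ioi c hint' tendsto_id).mono_left hU
  have hle := le_of_tendsto_of_tendsto ((hlim.const_mul (2 * a)).add_const _)
    (hlim'.add (hboundary.const_mul (2 * a))) <| by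
      filter_upwards [hU (Ioi_mem_atTop c)] with R hR
      exact intervalIntegral_exp_const_mul_sq_mul_sq_le a (le_of_lt hR) (hac R hR)
        ((intervalIntegrable_iff_integrableOn_Ioc_of_le (le_of_lt hR)).2
          (hint'.mono_set Ioc_subset_Ioi_self))
  simpa using hle

end WeightedPoincare

section GaussianWeight

variable {lam t : ℝ} {g h : ℝ → ℝ}

theorem mu_eq_exp_mul_sq (lam t z : ℝ) :
    mu lam t z = Real.exp (lam / (4 * (1 + t)) * z ^ 2) := by
  rw [mu, div_mul_eq_mul_div]

theorem continuous_mu (lam t : ℝ) : Continuous (mu lam t) := by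
  unfold mu
  fun_prop

theorem one_le_mu (ht : -1 ≤ t) (hlam : 0 ≤ lam) (z : ℝ) : 1 ≤ mu lam t z := by
  have ht' : 0 ≤ 1 + t := by linarith
  exact Real.one_le_exp (by positivity)

theorem mu_mul_sq_nonneg (lam t : ℝ) (g : ℝ → ℝ) (z : ℝ) : 0 ≤ mu lam t z * g z ^ 2 :=
  mul_nonneg (Real.exp_pos _).le (sq_nonneg _)

theorem integrableOn_mu_mul_sq (hg : AEStronglyMeasurable g (volume.restrict (Ioi 0)))
    (hmem : L2muSq lam t g < ⊤) : IntegrableOn (fun z => mu lam t z * g z ^ 2) (Ioi 0) :=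
  (lintegral_ofReal_ne_top_iff_integrable
    ((continuous_mu lam t).aestronglyMeasurable.mul (hg.pow 2))
    (.of_forall (mu_mul_sq_nonneg lam t g))).1 hmem.ne

theorem L2muSq_eq_ofReal_integral
    (hint : IntegrableOn (fun z => mu lam t z * g z ^ 2) (Ioi 0)) :
    L2muSq lam t g = ENNReal.ofReal (∫ z in Ioi 0, mu lam t z * g z ^ 2) :=
  (ofReal_integral_eq_lintegral_ofReal hint (.of_forall (mu_mul_sq_nonneg lam t g))).symm

theorem integrableOn_Ioc_of_L2muSq_lt_top (ht : -1 ≤ t) (hlam : 0 ≤ lam)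
    (hg : AEStronglyMeasurable g (volume.restrict (Ioi 0))) (hmem : L2muSq lam t g < ⊤) (R : ℝ) :
    IntegrableOn g (Ioc 0 R) := by
  have hdom : IntegrableOn (fun z => 1 + mu lam t z * g z ^ 2) (Ioc 0 R) :=
    (integrable_const 1).add ((integrableOn_mu_mul_sq hg hmem).mono_set Ioc_subset_Ioi_self)
  refine hdom.mono' (hg.mono_set Ioc_subset_Ioi_self) (.of_forall fun z => ?_)
  calc ‖g z‖ ≤ 1 + ‖g z‖ ^ 2 := by nlinarith [sq_nonneg (‖g z‖ - 1)]
    _ = 1 + g z ^ 2 := by rw [Real.norm_eq_abs, sq_abs]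
    _ ≤ 1 + mu lam t z * g z ^ 2 := by
      gcongr
      exact le_mul_of_one_le_left (sq_nonneg _) (one_le_mu ht hlam z)

theorem absolutelyContinuousOnInterval_of_L2muSq_deriv_lt_top (ht : -1 ≤ t) (hlam : 0 ≤ lam)
    (hdiff : ∀ z ∈ Ici 0, DifferentiableAt ℝ h z) (hmem : L2muSq lam t (deriv h) < ⊤)
    {R : ℝ} (hR : 0 ≤ R) : AbsolutelyContinuousOnInterval h 0 R := by
  refine absolutelyContinuousOnInterval_of_intervalIntegrable_deriv
    (fun z hz => hdiff z ?_) ?_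
  · exact (uIcc_of_le hR ▸ hz).1
  · exact (intervalIntegrable_iff_integrableOn_Ioc_of_le hR).2 <|
      integrableOn_Ioc_of_L2muSq_lt_top ht hlam (aestronglyMeasurable_deriv h _) hmem R

theorem ofReal_mul_L2muSq_le (hac : ∀ R > 0, AbsolutelyContinuousOnInterval h 0 R)
    (hmem : L2muSq lam t h < ⊤) :
    ENNReal.ofReal (lam / (2 * (1 + t))) * L2muSq lam t h ≤ L2muSq lam t (deriv h) := by
  obtain htop | hmem' := eq_top_or_lt_top (L2muSq lam t (deriv h))
  · exact htop ▸ le_top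
  have hint := integrableOn_mu_mul_sq
    (aestronglyMeasurable_of_absolutelyContinuousOnInterval hac) hmem
  have hint' := integrableOn_mu_mul_sq (aestronglyMeasurable_deriv h _) hmem'
  rw [L2muSq_eq_ofReal_integral hint, L2muSq_eq_ofReal_integral hint',
    ← ENNReal.ofReal_mul' (integral_nonneg (mu_mul_sq_nonneg lam t h))]
  refine ENNReal.ofReal_le_ofReal ?_
  have hconst : lam / (2 * (1 + t)) = 2 * (lam / (4 * (1 + t))) := by
    rw [← mul_div_assoc, ← mul_div_mul_left lam _ two_ne_zero]
    ring_nf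
  simp only [mu_eq_exp_mul_sq, hconst] at hint hint' ⊢
  simpa using integral_Ioi_exp_const_mul_sq_mul_sq_le _ hac hint hint'

end GaussianWeight

/-- Elements of `H¹_{μ_λ}(ℝ₊)` enter through their locally absolutely continuous representative,
whose almost everywhere derivative is the weak derivative. -/
theorem statement8_general (t lam : ℝ) (ht : -1 < t) (hlam : 0 ≤ lam) (h : ℝ → ℝ)
    (hac : ∀ R > 0, AbsolutelyContinuousOnInterval h 0 R) (hmem : L2muSq lam t h < ⊤) :
    ENNReal.ofReal (Real.sqrt lam / (Real.sqrt 2 * Real.sqrt (1 + t))) *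
        L2muSq lam t h ^ (1 / 2 : ℝ)
      ≤ L2muSq lam t (deriv h) ^ (1 / 2 : ℝ) := by
  have ht' : 0 < 1 + t := by linarith
  have hconst : Real.sqrt lam / (Real.sqrt 2 * Real.sqrt (1 + t)) =
      (lam / (2 * (1 + t))) ^ (1 / 2 : ℝ) := by
    rw [← Real.sqrt_eq_rpow, Real.sqrt_div hlam, Real.sqrt_mul zero_le_two]
  rw [hconst, ← ENNReal.ofReal_rpow_of_nonneg (by positivity) (by positivity),
    ← ENNReal.mul_rpow_of_nonneg _ _ (by positivity)]
  exact ENNReal.rpow_le_rpow (ofReal_mul_L2muSq_le hac hmem) (by positivity)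

/-- Weighted Poincaré-type inequality:
`λ^{1/2}/(√2 (1+t)^{1/2}) ‖h‖_{L²_{μ_λ}} ≤ ‖∂_z h‖_{L²_{μ_λ}}` for `h ∈ H¹_{μ_λ}(ℝ₊)`. -/
theorem statement8 (t lam : ℝ) (ht : 0 ≤ t) (hlam0 : 0 ≤ lam) (hlam1 : lam ≤ 1)
    (h : ℝ → ℝ) (hdiff : Differentiable ℝ h)
    (hmem : L2muSq lam t h < ⊤) (hmem' : L2muSq lam t (deriv h) < ⊤) :
    ENNReal.ofReal (Real.sqrt lam / (Real.sqrt 2 * Real.sqrt (1 + t))) *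
        L2muSq lam t h ^ (1 / 2 : ℝ)
      ≤ L2muSq lam t (deriv h) ^ (1 / 2 : ℝ) := by
  have ht' : -1 < t := by linarith
  exact statement8_general t lam ht' hlam0 h (fun R hR =>
    absolutelyContinuousOnInterval_of_L2muSq_deriv_lt_top ht'.le hlam0 (fun z _ => hdiff z) hmem'
      hR.le) hmem
end
end

section
/- Let t ≥ 0 and 0 < λ ≤ 1, and let h = h(z) belong to H¹_{μ_λ}(ℝ₊) (so that in particular h(z) → 0 as z → ∞). Then for k = 0, 1, 2 one has ‖z^k h‖_{L∞(ℝ₊)} ≤ C_λ (1+t)^{(1+2k)/4} ‖∂_z h‖_{L²_{μ_λ}}, where C_λ is a constant depending only on λ. -/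
open MeasureTheory Set

noncomputable section

/-!
Since `h` vanishes at infinity, `h z = -∫_z^∞ h'`, and `z ^ p ≤ s ^ p` for `s ≥ z` lets the power
pass under the integral: `z ^ p * |h z| ≤ ∫₀^∞ s ^ p * |h' s| ds`. Cauchy–Schwarz against the
weight `μ_λ` leaves the factor `(∫₀^∞ s ^ (2 * p) / μ_λ(t, s) ds) ^ (1 / 2)`, a Gaussian moment of
variance proportional to `(1 + t) / λ`, whose scaling produces the power of `1 + t`.
-/

open Filter Topology
open scoped ENNReal

lemma enorm_le_lintegral_Ioi_enorm_deriv {E : Type*} [NormedAddCommGroup E] [NormedSpace ℝ E]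
    [CompleteSpace E] {f : ℝ → E} {a : ℝ} (hf : ∀ x ∈ Ici a, DifferentiableAt ℝ f x)
    (hlim : Tendsto f atTop (𝓝 0)) : ‖f a‖ₑ ≤ ∫⁻ x in Ioi a, ‖deriv f x‖ₑ := by
  by_cases hfin : ∫⁻ x in Ioi a, ‖deriv f x‖ₑ = ⊤
  · exact hfin ▸ le_top
  have hint : IntegrableOn (deriv f) (Ioi a) :=
    ⟨(stronglyMeasurable_deriv f).aestronglyMeasurable, lt_top_iff_ne_top.2 hfin⟩
  have hftc : ∫ x in Ioi a, deriv f x = 0 - f a :=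
    integral_Ioi_of_hasDerivAt_of_tendsto' (fun x hx => (hf x hx).hasDerivAt) hint hlim
  calc ‖f a‖ₑ = ‖∫ x in Ioi a, deriv f x‖ₑ := by rw [hftc, zero_sub, enorm_neg]
    _ ≤ ∫⁻ x in Ioi a, ‖deriv f x‖ₑ := enorm_integral_le_lintegral_enorm _

lemma mul_enorm_le_lintegral_Ioi_mul_enorm_deriv {E : Type*} [NormedAddCommGroup E]
    [NormedSpace ℝ E] [CompleteSpace E] {f : ℝ → E} {φ : ℝ → ℝ≥0∞} {a : ℝ}
    (hφ : MonotoneOn φ (Ici a)) (hf : ∀ x ∈ Ici a, DifferentiableAt ℝ f x)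
    (hlim : Tendsto f atTop (𝓝 0)) :
    φ a * ‖f a‖ₑ ≤ ∫⁻ x in Ioi a, φ x * ‖deriv f x‖ₑ :=
  calc φ a * ‖f a‖ₑ ≤ φ a * ∫⁻ x in Ioi a, ‖deriv f x‖ₑ := by
        gcongr
        exact enorm_le_lintegral_Ioi_enorm_deriv hf hlim
    _ = ∫⁻ x in Ioi a, φ a * ‖deriv f x‖ₑ :=
        (lintegral_const_mul _ (stronglyMeasurable_deriv f).enorm).symm
    _ ≤ ∫⁻ x in Ioi a, φ x * ‖deriv f x‖ₑ :=
        setLIntegral_mono' measurableSet_Ioi fun x hx => by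
          gcongr
          exact hφ self_mem_Ici (mem_Ici_of_Ioi hx) (le_of_lt hx)

lemma lintegral_mul_le_weighted_L2_mul_L2 {α : Type*} [MeasurableSpace α] {ν : Measure α}
    {φ g w : α → ℝ≥0∞} (hφ : AEMeasurable φ ν) (hg : AEMeasurable g ν) (hw : AEMeasurable w ν)
    (hw_zero : ∀ x, w x ≠ 0) (hw_top : ∀ x, w x ≠ ⊤) :
    ∫⁻ x, φ x * g x ∂ν ≤
      (∫⁻ x, φ x ^ 2 / w x ∂ν) ^ (1 / 2 : ℝ) * (∫⁻ x, w x * g x ^ 2 ∂ν) ^ (1 / 2 : ℝ) := by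
  have hsqrt (x : α) : (w x ^ (1 / 2 : ℝ)) ^ (2 : ℝ) = w x := by
    rw [← ENNReal.rpow_mul]
    norm_num
  have hsqrt_zero (x : α) : w x ^ (1 / 2 : ℝ) ≠ 0 := by
    simp [ENNReal.rpow_eq_zero_iff, hw_zero x, hw_top x]
  have hsqrt_top (x : α) : w x ^ (1 / 2 : ℝ) ≠ ⊤ :=
    ENNReal.rpow_ne_top_of_nonneg (by norm_num) (hw_top x)
  calc ∫⁻ x, φ x * g x ∂ν
      = ∫⁻ x, ((fun x => φ x / w x ^ (1 / 2 : ℝ)) * fun x => w x ^ (1 / 2 : ℝ) * g x) x ∂ν := by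
        refine lintegral_congr fun x => ?_
        rw [Pi.mul_apply, ← mul_assoc, ENNReal.div_mul_cancel (hsqrt_zero x) (hsqrt_top x)]
    _ ≤ (∫⁻ x, (φ x / w x ^ (1 / 2 : ℝ)) ^ (2 : ℝ) ∂ν) ^ (1 / 2 : ℝ) *
          (∫⁻ x, (w x ^ (1 / 2 : ℝ) * g x) ^ (2 : ℝ) ∂ν) ^ (1 / 2 : ℝ) :=
        ENNReal.lintegral_mul_le_Lp_mul_Lq ν Real.HolderConjugate.two_two
          (hφ.div (hw.pow_const _)) ((hw.pow_const _).mul hg)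
    _ = _ := by
        simp only [ENNReal.div_rpow_of_nonneg _ _ zero_le_two,
          ENNReal.mul_rpow_of_nonneg _ _ zero_le_two, hsqrt, ENNReal.rpow_two]

lemma lintegral_rpow_mul_exp_neg_mul_rpow {p q b : ℝ} (hp : 0 < p) (hq : -1 < q) (hb : 0 < b) :
    ∫⁻ x in Ioi (0 : ℝ), ENNReal.ofReal (x ^ q * Real.exp (-b * x ^ p)) =
      ENNReal.ofReal (b ^ (-(q + 1) / p) * (1 / p) * Real.Gamma ((q + 1) / p)) := by
  rw [← integral_rpow_mul_exp_neg_mul_rpow hp hq hb,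
    ofReal_integral_eq_lintegral_ofReal (integrableOn_rpow_mul_exp_neg_mul_rpow hq hp hb)]
  filter_upwards [ae_restrict_mem measurableSet_Ioi] with x hx
  exact mul_nonneg (Real.rpow_nonneg (le_of_lt hx) q) (Real.exp_pos _).le

/-- The constant `C_λ` of the weighted embedding for the power `z ^ p`: the square root of the
Gaussian moment `∫₀^∞ s ^ (2 * p) * exp (-λ s² / 4) ds`, in closed form. -/
def sobolevConst (lam p : ℝ) : ℝ :=
  ((lam / 4) ^ (-(2 * p + 1) / 2) * (1 / 2) * Real.Gamma ((2 * p + 1) / 2)) ^ (1 / 2 : ℝ)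

section GaussianWeight

variable {lam t p : ℝ}

lemma mu_pos (z : ℝ) : 0 < mu lam t z := Real.exp_pos _

lemma measurable_mu : Measurable (mu lam t) := by
  unfold mu
  fun_prop

lemma sobolevConst_pos (hlam : 0 < lam) (hp : -1 / 2 < p) : 0 < sobolevConst lam p := by
  have hGamma : 0 < Real.Gamma ((2 * p + 1) / 2) := Real.Gamma_pos_of_pos (by linarith)
  unfold sobolevConst
  positivity

lemma L2muSq_eq_lintegral_mul_enorm_sq (f : ℝ → ℝ) :
    L2muSq lam t f = ∫⁻ z in Ioi (0 : ℝ), ENNReal.ofReal (mu lam t z) * ‖f z‖ₑ ^ 2 := by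
  refine lintegral_congr fun z => ?_
  rw [ENNReal.ofReal_mul (mu_pos z).le, Real.enorm_eq_ofReal_abs,
    ← ENNReal.ofReal_pow (abs_nonneg _), sq_abs]

lemma lintegral_rpow_sq_div_mu (hlam : 0 < lam) (ht : -1 < t) (hp : -1 / 2 < p) :
    ∫⁻ s in Ioi (0 : ℝ), ENNReal.ofReal (s ^ p) ^ 2 / ENNReal.ofReal (mu lam t s) =
      ENNReal.ofReal ((lam / 4 / (1 + t)) ^ (-(2 * p + 1) / 2) * (1 / 2) *
        Real.Gamma ((2 * p + 1) / 2)) := by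
  have h1t : 0 < 1 + t := by linarith
  rw [← lintegral_rpow_mul_exp_neg_mul_rpow two_pos (by linarith) (by positivity)]
  refine setLIntegral_congr_fun measurableSet_Ioi fun s (hs : 0 < s) => ?_
  have hsq : (s ^ p) ^ 2 = s ^ (2 * p) := by
    rw [← Real.rpow_mul_natCast hs.le, Nat.cast_ofNat, mul_comm]
  have hinv : Real.exp (-(lam / 4 / (1 + t)) * s ^ (2 : ℝ)) = (mu lam t s)⁻¹ := by
    rw [mu, ← Real.exp_neg, Real.rpow_two]
    congr 1
    field_simp
  rw [hinv, ← hsq, ← div_eq_mul_inv, ENNReal.ofReal_div_of_pos (mu_pos s),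
    ENNReal.ofReal_pow (by positivity)]

lemma lintegral_rpow_sq_div_mu_rpow_half (hlam : 0 < lam) (ht : -1 < t) (hp : -1 / 2 < p) :
    (∫⁻ s in Ioi (0 : ℝ), ENNReal.ofReal (s ^ p) ^ 2 / ENNReal.ofReal (mu lam t s)) ^ (1 / 2 : ℝ) =
      ENNReal.ofReal (sobolevConst lam p * (1 + t) ^ ((1 + 2 * p) / 4)) := by
  have h1t : 0 < 1 + t := by linarith
  have hGamma : 0 < Real.Gamma ((2 * p + 1) / 2) := Real.Gamma_pos_of_pos (by linarith)
  have hscale : (lam / 4 / (1 + t)) ^ (-(2 * p + 1) / 2) =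
      (lam / 4) ^ (-(2 * p + 1) / 2) * (1 + t) ^ ((2 * p + 1) / 2) := by
    rw [Real.div_rpow (by positivity) h1t.le, neg_div, Real.rpow_neg h1t.le, div_inv_eq_mul]
  have hroot : (1 + t) ^ ((1 + 2 * p) / 4) = ((1 + t) ^ ((2 * p + 1) / 2)) ^ (1 / 2 : ℝ) := by
    rw [← Real.rpow_mul h1t.le]
    ring_nf
  rw [lintegral_rpow_sq_div_mu hlam ht hp,
    ENNReal.ofReal_rpow_of_nonneg (by positivity) (by norm_num), hscale, hroot, sobolevConst,
    ← Real.mul_rpow (by positivity) (by positivity)]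
  ring_nf

lemma lintegral_rpow_mul_enorm_le_L2muSq (hlam : 0 < lam) (ht : -1 < t) (hp : -1 / 2 < p)
    {f : ℝ → ℝ} (hf : AEMeasurable f (volume.restrict (Ioi 0))) :
    ∫⁻ s in Ioi (0 : ℝ), ENNReal.ofReal (s ^ p) * ‖f s‖ₑ ≤
      ENNReal.ofReal (sobolevConst lam p * (1 + t) ^ ((1 + 2 * p) / 4)) *
        L2muSq lam t f ^ (1 / 2 : ℝ) := by
  rw [← lintegral_rpow_sq_div_mu_rpow_half hlam ht hp, L2muSq_eq_lintegral_mul_enorm_sq]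
  exact lintegral_mul_le_weighted_L2_mul_L2 (by fun_prop) hf.enorm
    measurable_mu.ennreal_ofReal.aemeasurable
    (fun s => (ENNReal.ofReal_pos.2 (mu_pos s)).ne') (fun _ => ENNReal.ofReal_ne_top)

lemma integrableOn_Ioi_of_L2muSq_lt_top (hlam : 0 < lam) (ht : -1 < t) {f : ℝ → ℝ}
    (hf : AEMeasurable f (volume.restrict (Ioi 0))) (hfin : L2muSq lam t f < ⊤) :
    IntegrableOn f (Ioi 0) := by
  have hbound := lintegral_rpow_mul_enorm_le_L2muSq (p := 0) hlam ht (by norm_num) hf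
  simp only [Real.rpow_zero, ENNReal.ofReal_one, one_mul] at hbound
  exact ⟨hf.aestronglyMeasurable, hbound.trans_lt (ENNReal.mul_lt_top ENNReal.ofReal_lt_top
    (ENNReal.rpow_lt_top_of_nonneg (by norm_num) hfin.ne))⟩

variable {h : ℝ → ℝ}

lemma tendsto_atTop_zero_of_L2muSq_lt_top (hlam : 0 < lam) (ht : -1 < t)
    (hd : DifferentiableOn ℝ h (Ioi 0)) (hh : L2muSq lam t h < ⊤)
    (hh' : L2muSq lam t (deriv h) < ⊤) : Tendsto h atTop (𝓝 0) :=
  tendsto_zero_of_hasDerivAt_of_integrableOn_Ioi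
    (fun _ hx => (hd.differentiableAt (Ioi_mem_nhds hx)).hasDerivAt)
    (integrableOn_Ioi_of_L2muSq_lt_top hlam ht (measurable_deriv h).aemeasurable hh')
    (integrableOn_Ioi_of_L2muSq_lt_top hlam ht
      (hd.continuousOn.aemeasurable measurableSet_Ioi) hh)

lemma ofReal_rpow_mul_enorm_le_L2muSq_deriv (hlam : 0 < lam) (ht : -1 < t) (hp : 0 ≤ p)
    (hd : DifferentiableOn ℝ h (Ioi 0)) (hlim : Tendsto h atTop (𝓝 0)) {z : ℝ} (hz : 0 < z) :
    ENNReal.ofReal (z ^ p) * ‖h z‖ₑ ≤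
      ENNReal.ofReal (sobolevConst lam p * (1 + t) ^ ((1 + 2 * p) / 4)) *
        L2muSq lam t (deriv h) ^ (1 / 2 : ℝ) := by
  have hmono : MonotoneOn (fun s : ℝ => ENNReal.ofReal (s ^ p)) (Ici z) := fun r hr s _ hrs =>
    ENNReal.ofReal_le_ofReal (Real.rpow_le_rpow (hz.le.trans hr) hrs hp)
  have hdiff : ∀ s ∈ Ici z, DifferentiableAt ℝ h s := fun s hs =>
    hd.differentiableAt (Ioi_mem_nhds (hz.trans_le hs))
  calc ENNReal.ofReal (z ^ p) * ‖h z‖ₑ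
      ≤ ∫⁻ s in Ioi z, ENNReal.ofReal (s ^ p) * ‖deriv h s‖ₑ :=
        mul_enorm_le_lintegral_Ioi_mul_enorm_deriv hmono hdiff hlim
    _ ≤ ∫⁻ s in Ioi 0, ENNReal.ofReal (s ^ p) * ‖deriv h s‖ₑ :=
        lintegral_mono_set (Ioi_subset_Ioi hz.le)
    _ ≤ _ := lintegral_rpow_mul_enorm_le_L2muSq hlam ht (by linarith)
        (measurable_deriv h).aemeasurable

lemma iSup_ofReal_abs_pow_mul_le_L2muSq_deriv (hlam : 0 < lam) (ht : -1 < t)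
    (hd : DifferentiableOn ℝ h (Ioi 0)) (hlim : Tendsto h atTop (𝓝 0)) (k : ℕ) :
    (⨆ z ∈ Ioi (0 : ℝ), ENNReal.ofReal |z ^ k * h z|) ≤
      ENNReal.ofReal (sobolevConst lam k * (1 + t) ^ ((1 + 2 * (k : ℝ)) / 4)) *
        L2muSq lam t (deriv h) ^ (1 / 2 : ℝ) := by
  refine iSup₂_le fun z (hz : 0 < z) => ?_
  have hsplit : ENNReal.ofReal |z ^ k * h z| = ENNReal.ofReal (z ^ (k : ℝ)) * ‖h z‖ₑ := by
    rw [abs_mul, abs_of_pos (pow_pos hz k), ENNReal.ofReal_mul (pow_pos hz k).le,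
      Real.rpow_natCast, Real.enorm_eq_ofReal_abs]
  exact hsplit ▸ ofReal_rpow_mul_enorm_le_L2muSq_deriv hlam ht k.cast_nonneg hd hlim hz

end GaussianWeight

theorem statement10_general (lam : ℝ) (hlam : 0 < lam) (n : ℕ) :
    ∃ C : ℝ, 0 < C ∧
      ∀ t > (-1 : ℝ), ∀ h : ℝ → ℝ, DifferentiableOn ℝ h (Ioi 0) → Tendsto h atTop (𝓝 0) →
        ∀ k : ℕ, k ≤ n →
          (⨆ z ∈ Ioi (0 : ℝ), ENNReal.ofReal |z ^ k * h z|)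
            ≤ ENNReal.ofReal (C * (1 + t) ^ ((1 + 2 * (k : ℝ)) / 4)) *
                L2muSq lam t (deriv h) ^ (1 / 2 : ℝ) := by
  have hpos (k : ℕ) : 0 < sobolevConst lam k :=
    sobolevConst_pos hlam (by linarith [k.cast_nonneg (α := ℝ)])
  refine ⟨∑ k ∈ Finset.range (n + 1), sobolevConst lam k,
    Finset.sum_pos (fun k _ => hpos k) Finset.nonempty_range_add_one, fun t ht h hd hlim k hk => ?_⟩
  have hle : sobolevConst lam k ≤ ∑ j ∈ Finset.range (n + 1), sobolevConst lam j :=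
    Finset.single_le_sum (f := fun j : ℕ => sobolevConst lam j) (fun j _ => (hpos j).le)
      (Finset.mem_range_succ_iff.2 hk)
  have h1t : 0 ≤ 1 + t := by linarith
  refine (iSup_ofReal_abs_pow_mul_le_L2muSq_deriv hlam ht hd hlim k).trans ?_
  gcongr

/-- Weighted Sobolev embedding: for `0 < λ ≤ 1` there is `C_λ > 0`, depending only on
`λ`, such that for every `t ≥ 0` and every `h ∈ H¹_{μ_λ}(ℝ₊)` one has, for `k = 0, 1, 2`,
`‖z^k h‖_{L∞(ℝ₊)} ≤ C_λ (1+t)^{(1+2k)/4} ‖∂_z h‖_{L²_{μ_λ}}`. -/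
theorem statement10 (lam : ℝ) (hlam0 : 0 < lam) (hlam1 : lam ≤ 1) :
    ∃ C : ℝ, 0 < C ∧
      ∀ t ≥ (0 : ℝ), ∀ h : ℝ → ℝ, Differentiable ℝ h →
        L2muSq lam t h < ⊤ → L2muSq lam t (deriv h) < ⊤ →
        ∀ k : ℕ, k ≤ 2 →
          (⨆ z ∈ Set.Ioi (0 : ℝ), ENNReal.ofReal |z ^ k * h z|)
            ≤ ENNReal.ofReal (C * (1 + t) ^ ((1 + 2 * (k : ℝ)) / 4)) *
                L2muSq lam t (deriv h) ^ (1 / 2 : ℝ) := by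
  obtain ⟨C, hC, hbound⟩ := statement10_general lam hlam0 2
  exact ⟨C, hC, fun t ht h hd hh hh' => hbound t (by linarith) h hd.differentiableOn
    (tendsto_atTop_zero_of_L2muSq_lt_top hlam0 (by linarith) hd.differentiableOn hh hh')⟩
end
end

section
/- Fix t ≥ 0 and let h = h(z) belong to H³_μ(ℝ₊) with h(0) = 0. Define 𝓗(z) = ∂_z h(z) + (z/(2(1+t))) h(z). Then for any 0 ≤ λ < λ̃ ≤ 1 and for k = 0, 1, 2 one has ‖∂_z^{k+1} h‖_{L²_{μ_λ}} ≤ C_{λ,λ̃} ‖∂_z^k 𝓗‖_{L²_{μ_{λ̃}}}, where C_{λ,λ̃} is a constant depending only on λ and λ̃. -/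
open MeasureTheory Set

noncomputable section

/-!
Write `a = 1/(2(1+t))`, so that `μ_λ = exp(bz²/2)` with `b = λa` and `𝓗 = Th` for `Tf = f' + azf`.
Completing squares under the weight and integrating by parts gives, with no loss in `λ`,

* `‖f'‖² ≤ ‖Tf‖² + a‖f‖²` for `0 ≤ a`, `b ≤ a`;
* `(2a - b)‖f‖² ≤ ‖Tf‖²` if `f(0) = 0`;
* `b‖f‖² ≤ ‖f'‖²` if `‖f‖ < ∞`.

In the first two the boundary term at infinity has the favourable sign; in the third it is
`b R exp(bR²/2) f(R)²`, which tends to `0` along a sequence because `1/R` is not integrable.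
Since `∂ᵏ(Th) = T(∂ᵏh) + k a ∂ᵏ⁻¹h`, the first inequality bounds `‖∂ᵏ⁺¹h‖` by `‖∂ᵏ𝓗‖` and lower
derivatives of `h`; by induction these are bounded by lower derivatives of `𝓗`, and the third
inequality brings them back to `‖∂ᵏ𝓗‖`.
-/

open Filter Topology
open scoped ENNReal NNReal

section HalfLine

variable {φ ψ F F' : ℝ → ℝ} {c R ε : ℝ}

lemma setLIntegral_Ioc_ofReal_le_add_of_sub_le_deriv (hφ : Continuous φ) (hψ : Continuous ψ)
    (hφ_nonneg : 0 ≤ φ) (hψ_nonneg : 0 ≤ ψ) (hF : ContinuousOn F (Ici c))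
    (hF' : ∀ z > c, HasDerivAt F (F' z) z) (hle : ∀ z > c, φ z - ψ z ≤ F' z) (hFc : 0 ≤ F c)
    (hR : c ≤ R) :
    ∫⁻ z in Ioc c R, ENNReal.ofReal (φ z)
      ≤ (∫⁻ z in Ioc c R, ENNReal.ofReal (ψ z)) + ENNReal.ofReal (F R) := by
  have hsub : (∫ z in c..R, φ z - ψ z) ≤ F R - F c :=
    intervalIntegral.integral_le_sub_of_hasDeriv_right_of_le hR (hF.mono Icc_subset_Ici_self)
      (fun z hz => (hF' z hz.1).hasDerivWithinAt) (hφ.sub hψ).integrableOn_Icc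
      (fun z hz => hle z hz.1)
  rw [intervalIntegral.integral_sub (hφ.intervalIntegrable _ _) (hψ.intervalIntegrable _ _)] at hsub
  have hofReal {f : ℝ → ℝ} (hf : Continuous f) (hf_nonneg : 0 ≤ f) :
      ∫⁻ z in Ioc c R, ENNReal.ofReal (f z) = ENNReal.ofReal (∫ z in c..R, f z) := by
    rw [intervalIntegral.integral_of_le hR]
    exact (ofReal_integral_eq_lintegral_ofReal hf.integrableOn_Ioc (.of_forall hf_nonneg)).symm
  rw [hofReal hφ hφ_nonneg, hofReal hψ hψ_nonneg]
  exact (ENNReal.ofReal_le_ofReal (by linarith)).trans ENNReal.ofReal_add_le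

lemma lintegral_Ioi_ofReal_le_of_sub_le_deriv (hφ : Continuous φ) (hψ : Continuous ψ)
    (hφ_nonneg : 0 ≤ φ) (hψ_nonneg : 0 ≤ ψ) (hF : ContinuousOn F (Ici c))
    (hF' : ∀ z > c, HasDerivAt F (F' z) z) (hle : ∀ z > c, φ z - ψ z ≤ F' z) (hFc : 0 ≤ F c)
    (hF_small : ∀ ε > 0, ∃ᶠ R in atTop, F R ≤ ε) :
    ∫⁻ z in Ioi c, ENNReal.ofReal (φ z) ≤ ∫⁻ z in Ioi c, ENNReal.ofReal (ψ z) := by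
  have htendsto : Tendsto (fun R => ∫⁻ z in Ioc c R, ENNReal.ofReal (φ z)) atTop
      (𝓝 (∫⁻ z in Ioi c, ENNReal.ofReal (φ z))) := by
    simpa only [Measure.restrict_restrict measurableSet_Iic, Iic_inter_Ioi, id] using
      (aecover_Iic (μ := volume.restrict (Ioi c))
        tendsto_id).lintegral_tendsto_of_countably_generated
          hφ.measurable.ennreal_ofReal.aemeasurable
  refine ENNReal.le_of_forall_pos_le_add fun ε hε _ =>
    le_of_tendsto_of_frequently htendsto ?_
  refine ((hF_small ε hε).and_eventually (eventually_ge_atTop c)).mono fun R ⟨hFR, hR⟩ => ?_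
  refine (setLIntegral_Ioc_ofReal_le_add_of_sub_le_deriv hφ hψ hφ_nonneg hψ_nonneg hF hF' hle hFc
    hR).trans ?_
  gcongr
  · exact Ioc_subset_Ioi_self
  · exact ENNReal.ofReal_le_of_le_toReal hFR

lemma frequently_mul_le_of_integrableOn_Ioi (hφ : IntegrableOn φ (Ioi c)) (hε : 0 < ε) :
    ∃ᶠ R in atTop, R * φ R ≤ ε := by
  by_contra hlarge
  simp only [not_frequently, not_le] at hlarge
  obtain ⟨R₀, hR₀⟩ := eventually_atTop.1 hlarge
  refine not_integrableOn_Ioi_inv (a := max (max c R₀) 0) ?_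
  have hφ' : IntegrableOn (fun z => ε⁻¹ * φ z) (Ioi (max (max c R₀) 0)) :=
    (hφ.mono_set (Ioi_subset_Ioi (by simp))).const_mul _
  refine hφ'.mono' measurable_inv.aestronglyMeasurable ?_
  refine (ae_restrict_mem measurableSet_Ioi).mono fun z hz => ?_
  simp only [mem_Ioi, max_lt_iff] at hz
  have hφz : ε < z * φ z := hR₀ z hz.1.2.le
  rw [Real.norm_of_nonneg (inv_nonneg.2 hz.2.le), inv_mul_eq_div, inv_eq_one_div,
    div_le_div_iff₀ hz.2 hε]
  linarith

end HalfLine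

/-- The Gaussian weight `exp(bz²/2)`; `μ_λ(t,·)` is the case `b = λ/(2(1+t))`. -/
def gaussWeight (b z : ℝ) : ℝ := Real.exp (b * z ^ 2 / 2)

/-- The squared norm of `f` in the `L²` space of the half-line with weight `exp(bz²/2)`, allowed to
be infinite. -/
def gaussNormSq (b : ℝ) (f : ℝ → ℝ) : ℝ≥0∞ :=
  ∫⁻ z in Ioi 0, ENNReal.ofReal (gaussWeight b z * f z ^ 2)

/-- The operator `f ↦ f' + azf` (the annihilation operator of a harmonic oscillator); the paper's
`𝓗` is `annihilation (1/(2(1+t))) h`. -/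
def annihilation (a : ℝ) (f : ℝ → ℝ) (z : ℝ) : ℝ := deriv f z + a * z * f z

section Weight

variable {a b b' z : ℝ} {f g : ℝ → ℝ}

lemma gaussWeight_nonneg (b z : ℝ) : 0 ≤ gaussWeight b z := (Real.exp_pos _).le

@[fun_prop]
lemma continuous_gaussWeight (b : ℝ) : Continuous (gaussWeight b) := by
  unfold gaussWeight
  fun_prop

lemma hasDerivAt_gaussWeight (b z : ℝ) :
    HasDerivAt (gaussWeight b) (gaussWeight b z * (b * z)) z := by
  have hexponent : HasDerivAt (fun z : ℝ => b * z ^ 2 / 2) (b * z) z :=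
    (((hasDerivAt_pow 2 z).const_mul b).div_const 2).congr_deriv (by simp; ring)
  exact hexponent.exp

lemma gaussNormSq_mono (hb : b ≤ b') (f : ℝ → ℝ) : gaussNormSq b f ≤ gaussNormSq b' f := by
  unfold gaussNormSq gaussWeight
  gcongr

lemma gaussNormSq_const_mul (b c : ℝ) (f : ℝ → ℝ) :
    gaussNormSq b (fun z => c * f z) = ENNReal.ofReal (c ^ 2) * gaussNormSq b f := by
  unfold gaussNormSq
  rw [← lintegral_const_mul' _ _ ENNReal.ofReal_ne_top]
  simp_rw [← ENNReal.ofReal_mul (sq_nonneg c), mul_pow, mul_left_comm]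

lemma gaussNormSq_add_le (b : ℝ) (hf : Continuous f) (g : ℝ → ℝ) :
    gaussNormSq b (fun z => f z + g z) ≤ 2 * gaussNormSq b f + 2 * gaussNormSq b g := by
  unfold gaussNormSq
  rw [← lintegral_const_mul' _ _ ENNReal.ofNat_ne_top,
    ← lintegral_const_mul' _ _ ENNReal.ofNat_ne_top, ← lintegral_add_left (by fun_prop)]
  refine lintegral_mono fun z => ?_
  have hweight := gaussWeight_nonneg b z
  rw [← mul_add, ← ENNReal.ofReal_add (by positivity) (by positivity), ← ENNReal.ofReal_ofNat 2,
    ← ENNReal.ofReal_mul zero_le_two, ← mul_add, mul_left_comm]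
  exact ENNReal.ofReal_le_ofReal (mul_le_mul_of_nonneg_left add_sq_le hweight)

lemma integrableOn_gaussWeight_mul_sq (hf : Continuous f) (hfin : gaussNormSq b f < ∞) :
    IntegrableOn (fun z => gaussWeight b z * f z ^ 2) (Ioi 0) := by
  have hcont : Continuous fun z => gaussWeight b z * f z ^ 2 := by fun_prop
  refine ⟨hcont.aestronglyMeasurable, ?_⟩
  rwa [hasFiniteIntegral_iff_ofReal
    (.of_forall fun z => mul_nonneg (gaussWeight_nonneg b z) (sq_nonneg _))]

lemma contDiff_annihilation (a : ℝ) {n : WithTop ℕ∞} (hf : ContDiff ℝ (n + 1) f) :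
    ContDiff ℝ n (annihilation a f) := by
  have hf_n : ContDiff ℝ n f := hf.of_le le_self_add
  unfold annihilation
  fun_prop

lemma continuous_annihilation (a : ℝ) (hf : ContDiff ℝ 1 f) : Continuous (annihilation a f) :=
  (contDiff_annihilation a (n := 0) (by simpa using hf)).continuous

end Weight

section Estimates

variable {a b z : ℝ} {f : ℝ → ℝ}

lemma hasDerivAt_mul_gaussWeight_mul_sq (b : ℝ) (hf : DifferentiableAt ℝ f z) :
    HasDerivAt (fun z => z * (gaussWeight b z * f z ^ 2))
      (gaussWeight b z * ((1 + b * z ^ 2) * f z ^ 2 + 2 * z * f z * deriv f z)) z :=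
  ((hasDerivAt_id z).mul ((hasDerivAt_gaussWeight b z).mul (hf.hasDerivAt.pow 2))).congr_deriv
    (by simp; ring)

lemma hasDerivAt_gaussWeight_mul_sq_div (b : ℝ) (hf : DifferentiableAt ℝ f z) (hz : z ≠ 0) :
    HasDerivAt (fun z => gaussWeight b z * (f z ^ 2 / z))
      (gaussWeight b z * (b * f z ^ 2 + 2 * (f z / z) * deriv f z - (f z / z) ^ 2)) z :=
  ((hasDerivAt_gaussWeight b z).mul ((hf.hasDerivAt.pow 2).div (hasDerivAt_id z) hz)).congr_deriv
    (by simp; field_simp; ring)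

lemma continuous_sq_div_self (hf : Differentiable ℝ f) (hf₀ : f 0 = 0) :
    Continuous fun z => f z ^ 2 / z := by
  have heq : (fun z => f z ^ 2 / z) = fun z => f z * dslope f 0 z := by
    funext z
    rcases eq_or_ne z 0 with rfl | hz
    · simp [hf₀]
    · rw [dslope_of_ne f hz, slope_def_field, hf₀]
      ring
  rw [heq]
  refine hf.continuous.mul (continuous_iff_continuousAt.2 fun z => ?_)
  rcases eq_or_ne z 0 with rfl | hz
  · exact continuousAt_dslope_same.2 (hf 0)
  · exact (continuousAt_dslope_of_ne hz).2 (hf z).continuousAt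

theorem gaussNormSq_deriv_le (ha : 0 ≤ a) (hba : b ≤ a) (hf : ContDiff ℝ 1 f) :
    gaussNormSq b (deriv f)
      ≤ gaussNormSq b (annihilation a f) + ENNReal.ofReal a * gaussNormSq b f := by
  have hTf := continuous_annihilation a hf
  have hdiff : Differentiable ℝ f := hf.differentiable one_ne_zero
  have hw := gaussWeight_nonneg b
  have hflux (z : ℝ) := (hasDerivAt_mul_gaussWeight_mul_sq b (hdiff z)).const_mul (-a)
  have hle : ∫⁻ z in Ioi 0, ENNReal.ofReal (gaussWeight b z * deriv f z ^ 2) ≤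
      ∫⁻ z in Ioi 0, ENNReal.ofReal
        (gaussWeight b z * annihilation a f z ^ 2 + a * (gaussWeight b z * f z ^ 2)) := by
    refine lintegral_Ioi_ofReal_le_of_sub_le_deriv (by fun_prop) (by fun_prop)
      (fun z => by have := hw z; positivity) (fun z => by have := hw z; positivity)
      (continuous_iff_continuousAt.2 fun z => (hflux z).continuousAt).continuousOn
      (fun z _ => hflux z) (fun z _ => ?_) (by simp) (fun ε hε => ?_)
    · have hsquare : 0 ≤ gaussWeight b z * (a * (a - b) * z ^ 2 * f z ^ 2) := by
        have := hw z
        have := sub_nonneg.2 hba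
        positivity
      unfold annihilation
      linear_combination hsquare
    · refine Eventually.frequently ((eventually_ge_atTop 0).mono fun R hR => ?_)
      have : 0 ≤ a * (R * (gaussWeight b R * f R ^ 2)) := by have := hw R; positivity
      linarith
  refine hle.trans_eq ?_
  unfold gaussNormSq
  rw [← lintegral_const_mul' _ _ ENNReal.ofReal_ne_top, ← lintegral_add_left (by fun_prop)]
  refine lintegral_congr fun z => ?_
  have := hw z
  rw [ENNReal.ofReal_add (by positivity) (by positivity), ENNReal.ofReal_mul ha]

-- The completed square is `(Tf - f/z)²`: it vanishes for `f = z exp(-az²/2)`, the first odd Hermite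
-- function, which is the extremal of this Hardy-type inequality.
theorem mul_gaussNormSq_le_annihilation (hba : b ≤ 2 * a) (hf : ContDiff ℝ 1 f) (hf₀ : f 0 = 0) :
    ENNReal.ofReal (2 * a - b) * gaussNormSq b f ≤ gaussNormSq b (annihilation a f) := by
  have hTf := continuous_annihilation a hf
  have hdiff : Differentiable ℝ f := hf.differentiable one_ne_zero
  have hquot := continuous_sq_div_self hdiff hf₀
  have hw := gaussWeight_nonneg b
  unfold gaussNormSq
  rw [← lintegral_const_mul' _ _ ENNReal.ofReal_ne_top]
  simp_rw [← ENNReal.ofReal_mul (sub_nonneg.2 hba)]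
  refine lintegral_Ioi_ofReal_le_of_sub_le_deriv (by fun_prop) (by fun_prop)
    (fun z => by have := hw z; have := sub_nonneg.2 hba; positivity)
    (fun z => by have := hw z; positivity)
    (F := fun z => -(gaussWeight b z * (f z ^ 2 / z))) (by fun_prop)
    (fun z hz => (hasDerivAt_gaussWeight_mul_sq_div b (hdiff z) (ne_of_gt hz)).neg)
    (fun z hz => ?_) (by simp) (fun ε hε => ?_)
  · have hsquare : 0 ≤ gaussWeight b z * (annihilation a f z - f z / z) ^ 2 := by
      have := hw z
      positivity
    have hcancel : f z / z * z = f z := div_mul_cancel₀ _ (ne_of_gt hz)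
    unfold annihilation at *
    linear_combination hsquare - 2 * a * gaussWeight b z * f z * hcancel
  · refine Eventually.frequently ((eventually_ge_atTop 0).mono fun R hR => ?_)
    have : 0 ≤ gaussWeight b R * (f R ^ 2 / R) := by have := hw R; positivity
    linarith

lemma frequently_mul_gaussWeight_mul_sq_le (hf : Continuous f) (hfin : gaussNormSq b f < ∞)
    {c ε : ℝ} (hc : 0 < c) (hε : 0 < ε) :
    ∃ᶠ R in atTop, c * (R * (gaussWeight b R * f R ^ 2)) ≤ ε :=
  (frequently_mul_le_of_integrableOn_Ioi (integrableOn_gaussWeight_mul_sq hf hfin)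
    (div_pos hε hc)).mono fun _ hR => (le_div_iff₀' hc).1 hR

lemma gaussNormSq_le_of_add_deriv_flux {c : ℝ} {u v : ℝ → ℝ} (hf : ContDiff ℝ 1 f)
    (hfin : gaussNormSq b f < ∞) (hc : 0 < c) (hu : Continuous u) (hv : Continuous v)
    (hle : ∀ z, u z ^ 2 ≤ v z ^ 2 +
      c * ((1 + b * z ^ 2) * f z ^ 2 + 2 * z * f z * deriv f z)) :
    gaussNormSq b u ≤ gaussNormSq b v := by
  have hflux (z : ℝ) := (hasDerivAt_mul_gaussWeight_mul_sq b
    (hf.differentiable one_ne_zero z)).const_mul c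
  have hw := gaussWeight_nonneg b
  refine lintegral_Ioi_ofReal_le_of_sub_le_deriv (by fun_prop) (by fun_prop)
    (fun z => by have := hw z; positivity) (fun z => by have := hw z; positivity)
    (continuous_iff_continuousAt.2 fun z => (hflux z).continuousAt).continuousOn
    (fun z _ => hflux z) (fun z _ => ?_) (by simp)
    (fun ε hε => frequently_mul_gaussWeight_mul_sq_le hf.continuous hfin hc hε)
  linear_combination mul_le_mul_of_nonneg_left (hle z) (hw z)

theorem mul_gaussNormSq_le_deriv (hb : 0 < b) (hf : ContDiff ℝ 1 f)
    (hfin : gaussNormSq b f < ∞) :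
    ENNReal.ofReal b * gaussNormSq b f ≤ gaussNormSq b (deriv f) := by
  have hf' : Continuous (deriv f) := hf.continuous_deriv le_rfl
  calc ENNReal.ofReal b * gaussNormSq b f = gaussNormSq b (fun z => √b * f z) := by
        rw [gaussNormSq_const_mul, Real.sq_sqrt hb.le]
    _ ≤ gaussNormSq b (deriv f) :=
        gaussNormSq_le_of_add_deriv_flux hf hfin hb (by fun_prop) hf' fun z => by
          rw [mul_pow, Real.sq_sqrt hb.le]
          linear_combination sq_nonneg (deriv f z + b * z * f z)

theorem gaussNormSq_mul_self_lt_top (hb : 0 < b) (hf : ContDiff ℝ 1 f)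
    (hfin : gaussNormSq b f < ∞) (hfin' : gaussNormSq b (deriv f) < ∞) :
    gaussNormSq b (fun z => z * f z) < ∞ := by
  have hle : gaussNormSq b (fun z => z * f z) ≤ gaussNormSq b (fun z => 2 / b * deriv f z) :=
    gaussNormSq_le_of_add_deriv_flux (c := 2 / b) hf hfin (by positivity) (by fun_prop)
      (by fun_prop) fun z => by
        have hsquare : 0 ≤ (2 / b * deriv f z + z * f z) ^ 2 + 2 / b * f z ^ 2 := by positivity
        have hcancel : 2 / b * b = 2 := div_mul_cancel₀ _ hb.ne'
        linear_combination hsquare - z ^ 2 * f z ^ 2 * hcancel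
  refine hle.trans_lt ?_
  rw [gaussNormSq_const_mul]
  exact ENNReal.mul_lt_top ENNReal.ofReal_lt_top hfin'

end Estimates

section Iterate

variable {a b : ℝ} {f h : ℝ → ℝ} {k : ℕ}

lemma contDiff_one_iterate_deriv {i : ℕ} (hh : ContDiff ℝ (k + 1 : ℕ) h) (hi : i ≤ k) :
    ContDiff ℝ 1 (deriv^[i] h) :=
  ContDiff.iterate_deriv' 1 i (hh.of_le (by exact_mod_cast (by lia : 1 + i ≤ k + 1)))

lemma hasDerivAt_annihilation (a : ℝ) (hf : ContDiff ℝ 2 f) (z : ℝ) :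
    HasDerivAt (annihilation a f) (annihilation a (deriv f) z + a * f z) z := by
  have hdf : HasDerivAt f (deriv f z) z := (hf.differentiable two_ne_zero z).hasDerivAt
  have hddf : HasDerivAt (deriv f) (deriv (deriv f) z) z :=
    (hf.differentiable_deriv_two z).hasDerivAt
  refine (hddf.add (((hasDerivAt_id z).const_mul a).mul hdf)).congr_deriv ?_
  simp only [annihilation, id]
  ring

lemma iterate_deriv_succ_annihilation (a : ℝ) (hh : ContDiff ℝ (k + 2 : ℕ) h) :
    deriv^[k + 1] (annihilation a h) =
      fun z => annihilation a (deriv^[k + 1] h) z + (k + 1) * a * deriv^[k] h z := by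
  induction k with
  | zero =>
    funext z
    simpa using (hasDerivAt_annihilation a hh z).deriv
  | succ k ih =>
    rw [Function.iterate_succ_apply', ih (hh.of_le (by exact_mod_cast Nat.le_succ _))]
    funext z
    have hkh : ContDiff ℝ 2 (deriv^[k + 1] h) :=
      ContDiff.iterate_deriv' 2 (k + 1) (by rwa [add_comm 2])
    have hlower : HasDerivAt (deriv^[k] h) (deriv^[k + 1] h z) z := by
      rw [Function.iterate_succ_apply']
      exact ((contDiff_one_iterate_deriv hh (by lia)).differentiable one_ne_zero z).hasDerivAt
    refine ((hasDerivAt_annihilation a hkh z).add (hlower.const_mul _)).deriv.trans ?_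
    rw [Function.iterate_succ_apply' deriv (k + 1)]
    push_cast
    ring

lemma gaussNormSq_annihilation_lt_top (a : ℝ) (hb : 0 < b) (hf : ContDiff ℝ 1 f)
    (hfin : gaussNormSq b f < ∞) (hfin' : gaussNormSq b (deriv f) < ∞) :
    gaussNormSq b (annihilation a f) < ∞ := by
  have heq : annihilation a f = fun z => deriv f z + a * (z * f z) :=
    funext fun z => by rw [annihilation, mul_assoc]
  rw [heq]
  refine (gaussNormSq_add_le b (hf.continuous_deriv le_rfl) _).trans_lt ?_
  rw [gaussNormSq_const_mul]
  have hmul := gaussNormSq_mul_self_lt_top hb hf hfin hfin'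
  finiteness

lemma gaussNormSq_iterate_deriv_annihilation_lt_top (a : ℝ) (hb : 0 < b)
    (hh : ContDiff ℝ (k + 1 : ℕ) h) (hfin : ∀ i ≤ k + 1, gaussNormSq b (deriv^[i] h) < ∞) :
    gaussNormSq b (deriv^[k] (annihilation a h)) < ∞ := by
  have hkh : ContDiff ℝ 1 (deriv^[k] h) := contDiff_one_iterate_deriv hh le_rfl
  have hTkh : gaussNormSq b (annihilation a (deriv^[k] h)) < ∞ :=
    gaussNormSq_annihilation_lt_top a hb hkh (hfin k k.le_succ)
      (by simpa only [Function.iterate_succ_apply'] using hfin (k + 1) le_rfl)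
  cases k with
  | zero => exact hTkh
  | succ k =>
    rw [iterate_deriv_succ_annihilation a hh]
    refine (gaussNormSq_add_le b (continuous_annihilation a hkh) _).trans_lt ?_
    rw [gaussNormSq_const_mul]
    have hlower := hfin k (by lia)
    finiteness

lemma mul_gaussNormSq_iterate_deriv_annihilation_le {κ : ℝ≥0} (hb : 0 < b) (hκ : a ≤ κ * b)
    (hh : ContDiff ℝ (k + 2 : ℕ) h) (hfin : ∀ i ≤ k + 1, gaussNormSq b (deriv^[i] h) < ∞) :
    ENNReal.ofReal a * gaussNormSq b (deriv^[k] (annihilation a h))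
      ≤ κ * gaussNormSq b (deriv^[k + 1] (annihilation a h)) := by
  have hkTh : ContDiff ℝ 1 (deriv^[k] (annihilation a h)) :=
    contDiff_one_iterate_deriv (contDiff_annihilation a hh) le_rfl
  have hkTh_fin : gaussNormSq b (deriv^[k] (annihilation a h)) < ∞ :=
    gaussNormSq_iterate_deriv_annihilation_lt_top a hb
      (hh.of_le (by exact_mod_cast Nat.le_succ _)) hfin
  rw [Function.iterate_succ_apply']
  calc ENNReal.ofReal a * gaussNormSq b (deriv^[k] (annihilation a h))
      ≤ κ * ENNReal.ofReal b * gaussNormSq b (deriv^[k] (annihilation a h)) := by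
        gcongr
        rw [← ENNReal.ofReal_coe_nnreal, ← ENNReal.ofReal_mul κ.coe_nonneg]
        exact ENNReal.ofReal_le_ofReal hκ
    _ ≤ κ * gaussNormSq b (deriv (deriv^[k] (annihilation a h))) := by
        rw [mul_assoc]
        gcongr
        exact mul_gaussNormSq_le_deriv hb hkTh hkTh_fin

/-- The square of the constant in the estimate of `∂ᵏ⁺¹h` by `∂ᵏ(h' + azh)` in the `L²` space with
weight `exp(bz²/2)`, for any `κ` with `a ≤ κb`. -/
def derivBound (κ : ℝ≥0) : ℕ → ℝ≥0
  | 0 => 2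
  | k + 1 => 2 + (2 * (k + 1) ^ 2 + 1) * (κ * derivBound κ k)

lemma derivBound_pos (κ : ℝ≥0) (k : ℕ) : 0 < derivBound κ k := by
  cases k <;> simp [derivBound]

lemma derivBound_mono {κ : ℝ≥0} (hκ : 1 ≤ κ) : Monotone (derivBound κ) :=
  monotone_nat_of_le_succ fun k =>
    calc derivBound κ k = 1 * (1 * derivBound κ k) := by ring
      _ ≤ (2 * (k + 1) ^ 2 + 1) * (κ * derivBound κ k) := by gcongr; exact le_add_self
      _ ≤ derivBound κ (k + 1) := le_add_self

lemma gaussNormSq_iterate_deriv_add_two_le (ha : 0 ≤ a) (hba : b ≤ a)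
    (hh : ContDiff ℝ (k + 2 : ℕ) h) :
    gaussNormSq b (deriv^[k + 2] h) ≤
      2 * gaussNormSq b (deriv^[k + 1] (annihilation a h))
        + 2 * (k + 1) ^ 2 * (ENNReal.ofReal a * (ENNReal.ofReal a * gaussNormSq b (deriv^[k] h)))
        + ENNReal.ofReal a * gaussNormSq b (deriv^[k + 1] h) := by
  have hTh : Continuous (deriv^[k + 1] (annihilation a h)) :=
    (ContDiff.iterate_deriv' 0 (k + 1) (by simpa using contDiff_annihilation a hh)).continuous
  have hcommutator : annihilation a (deriv^[k + 1] h) =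
      fun z => deriv^[k + 1] (annihilation a h) z + -((k + 1) * a) * deriv^[k] h z := by
    rw [iterate_deriv_succ_annihilation a hh]
    funext z
    ring
  have hcoeff : ENNReal.ofReal ((-((k + 1) * a)) ^ 2) =
      (k + 1) ^ 2 * (ENNReal.ofReal a * ENNReal.ofReal a) := by
    rw [neg_sq, mul_pow, ENNReal.ofReal_mul (by positivity), sq a, ENNReal.ofReal_mul ha,
      ENNReal.ofReal_pow (by positivity), ENNReal.ofReal_add (by positivity) zero_le_one,
      ENNReal.ofReal_natCast, ENNReal.ofReal_one]
  rw [Function.iterate_succ_apply' deriv (k + 1)]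
  refine (gaussNormSq_deriv_le ha hba (contDiff_one_iterate_deriv hh le_rfl)).trans ?_
  gcongr
  rw [hcommutator]
  refine (gaussNormSq_add_le b hTh _).trans_eq ?_
  rw [gaussNormSq_const_mul, hcoeff]
  ring

-- The bound on the lower derivative `∂ᵏh` is carried along to make the induction work.
theorem gaussNormSq_iterate_deriv_le {κ : ℝ≥0} (hb : 0 < b) (hba : b ≤ a) (hκ : a ≤ κ * b)
    (hh : ContDiff ℝ (k + 1 : ℕ) h) (hh₀ : h 0 = 0)
    (hfin : ∀ i ≤ k, gaussNormSq b (deriv^[i] h) < ∞) :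
    ENNReal.ofReal a * gaussNormSq b (deriv^[k] h)
        ≤ derivBound κ k * gaussNormSq b (deriv^[k] (annihilation a h)) ∧
      gaussNormSq b (deriv^[k + 1] h)
        ≤ derivBound κ k * gaussNormSq b (deriv^[k] (annihilation a h)) := by
  have ha : 0 ≤ a := hb.le.trans hba
  induction k with
  | zero =>
    have hlow : ENNReal.ofReal a * gaussNormSq b h ≤ gaussNormSq b (annihilation a h) :=
      (mul_le_mul_left (ENNReal.ofReal_le_ofReal (by linarith)) _).trans
        (mul_gaussNormSq_le_annihilation (by linarith) hh hh₀)
    simp only [derivBound, Function.iterate_zero, id, zero_add, Function.iterate_one,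
      ENNReal.coe_ofNat, two_mul]
    exact ⟨hlow.trans le_self_add,
      (gaussNormSq_deriv_le ha hba hh).trans (add_le_add_right hlow _)⟩
  | succ k ih =>
    obtain ⟨hlow, hhigh⟩ := ih (hh.of_le (by exact_mod_cast Nat.le_succ _))
      (fun i hi => hfin i (hi.trans k.le_succ))
    set Y := gaussNormSq b (deriv^[k] (annihilation a h))
    set Y' := gaussNormSq b (deriv^[k + 1] (annihilation a h))
    have hYY' : ENNReal.ofReal a * Y ≤ κ * Y' :=
      mul_gaussNormSq_iterate_deriv_annihilation_le hb hκ hh hfin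
    have hraise {X : ℝ≥0∞} (hX : X ≤ derivBound κ k * Y) :
        ENNReal.ofReal a * X ≤ (κ * derivBound κ k : ℝ≥0) * Y' := by
      calc ENNReal.ofReal a * X ≤ ENNReal.ofReal a * (derivBound κ k * Y) := by gcongr
        _ = derivBound κ k * (ENNReal.ofReal a * Y) := by ring
        _ ≤ derivBound κ k * (κ * Y') := by gcongr
        _ = (κ * derivBound κ k : ℝ≥0) * Y' := by push_cast; ring
    have hsum : (derivBound κ (k + 1) : ℝ≥0∞) * Y' = 2 * Y'
        + 2 * (k + 1) ^ 2 * ((κ * derivBound κ k : ℝ≥0) * Y')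
        + (κ * derivBound κ k : ℝ≥0) * Y' := by
      rw [derivBound]
      push_cast
      ring
    rw [hsum]
    refine ⟨(hraise hhigh).trans le_add_self,
      (gaussNormSq_iterate_deriv_add_two_le ha hba hh).trans ?_⟩
    exact add_le_add (add_le_add_right (mul_le_mul_right (hraise hlow) _) _) (hraise hhigh)

end Iterate

lemma L2muSq_eq_gaussNormSq {t : ℝ} (ht : -1 < t) (lam : ℝ) (f : ℝ → ℝ) :
    L2muSq lam t f = gaussNormSq (lam * (1 / (2 * (1 + t)))) f := by
  have ht' : 1 + t ≠ 0 := by linarith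
  refine lintegral_congr fun z => ?_
  have hexponent : lam * z ^ 2 / (4 * (1 + t)) = lam * (1 / (2 * (1 + t))) * z ^ 2 / 2 := by
    field_simp
    norm_num
  rw [mu, gaussWeight, hexponent]

lemma L2muSq_mono {lam lam' t : ℝ} (ht : -1 < t) (hlam : lam ≤ lam') (f : ℝ → ℝ) :
    L2muSq lam t f ≤ L2muSq lam' t f := by
  rw [L2muSq_eq_gaussNormSq ht, L2muSq_eq_gaussNormSq ht]
  have ht' : 0 < 1 + t := by linarith
  exact gaussNormSq_mono (by gcongr) f

theorem L2muSq_iterate_deriv_le {lam t : ℝ} (hlam₀ : 0 < lam) (hlam₁ : lam ≤ 1) (ht : -1 < t)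
    {h : ℝ → ℝ} {n k : ℕ} (hh : ContDiff ℝ (n + 1 : ℕ) h) (hh₀ : h 0 = 0)
    (hfin : ∀ i ≤ n, L2muSq lam t (deriv^[i] h) < ∞) (hk : k ≤ n) :
    L2muSq lam t (deriv^[k + 1] h) ≤ derivBound lam⁻¹.toNNReal n *
      L2muSq lam t (deriv^[k] fun z => deriv h z + z / (2 * (1 + t)) * h z) := by
  simp only [L2muSq_eq_gaussNormSq ht] at hfin ⊢
  have ha : 0 < 1 / (2 * (1 + t)) := one_div_pos.2 (by linarith)
  set a := 1 / (2 * (1 + t)) with ha_def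
  have hH : (fun z => deriv h z + z / (2 * (1 + t)) * h z) = annihilation a h := by
    funext z
    rw [annihilation, ha_def]
    ring
  have hκ : a ≤ lam⁻¹.toNNReal * (lam * a) := by
    rw [Real.coe_toNNReal _ (by positivity), inv_mul_cancel_left₀ hlam₀.ne']
  have hκ₁ : 1 ≤ lam⁻¹.toNNReal := Real.one_le_toNNReal.2 ((one_le_inv₀ hlam₀).2 hlam₁)
  rw [hH]
  refine (gaussNormSq_iterate_deriv_le (mul_pos hlam₀ ha) (mul_le_of_le_one_left ha.le hlam₁) hκ
    (hh.of_le (by exact_mod_cast Nat.succ_le_succ hk)) hh₀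
    (fun i hi => hfin i (hi.trans hk))).2.trans ?_
  gcongr
  exact derivBound_mono hκ₁ hk

theorem statement11_general (n : ℕ) (lam lam' : ℝ) (hle : lam ≤ lam') (hlam0 : 0 < lam')
    (hlam1 : lam' ≤ 1) :
    ∃ C : ℝ, 0 < C ∧
      ∀ t > (-1 : ℝ), ∀ h : ℝ → ℝ,
        ContDiff ℝ (n + 1 : ℕ) h → h 0 = 0 →
        (∀ i : ℕ, i ≤ n → L2muSq lam' t (deriv^[i] h) < ⊤) →
        ∀ k : ℕ, k ≤ n →
          L2muSq lam t (deriv^[k + 1] h) ^ (1 / 2 : ℝ)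
            ≤ ENNReal.ofReal C *
                L2muSq lam' t
                    (deriv^[k] fun z => deriv h z + z / (2 * (1 + t)) * h z) ^ (1 / 2 : ℝ) := by
  have hpos := derivBound_pos lam'⁻¹.toNNReal n
  refine ⟨(derivBound lam'⁻¹.toNNReal n ^ (1 / 2 : ℝ) : ℝ≥0), by positivity, ?_⟩
  intro t ht h hh hh₀ hfin k hk
  rw [ENNReal.ofReal_coe_nnreal, ENNReal.coe_rpow_of_nonneg _ (by norm_num),
    ← ENNReal.mul_rpow_of_nonneg _ _ (by norm_num)]
  exact ENNReal.rpow_le_rpow ((L2muSq_mono ht hle _).trans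
    (L2muSq_iterate_deriv_le hlam0 hlam1 ht hh hh₀ hfin hk)) (by norm_num)

/-- Weighted regularity transfer: for `0 ≤ λ < λ̃ ≤ 1` there is `C_{λ,λ̃} > 0`,
depending only on `λ` and `λ̃`, such that for any `t ≥ 0` and any `h ∈ H³_μ(ℝ₊)` with
`h(0) = 0`, setting `𝓗 = ∂_z h + (z/(2(1+t))) h`, one has, for `k = 0, 1, 2`,
`‖∂_z^{k+1} h‖_{L²_{μ_λ}} ≤ C_{λ,λ̃} ‖∂_z^k 𝓗‖_{L²_{μ_{λ̃}}}`. -/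
theorem statement11 (lam lam' : ℝ) (hlam0 : 0 ≤ lam) (hlt : lam < lam') (hlam1 : lam' ≤ 1) :
    ∃ C : ℝ, 0 < C ∧
      ∀ t ≥ (0 : ℝ), ∀ h : ℝ → ℝ,
        ContDiff ℝ 3 h → h 0 = 0 →
        (∀ i : ℕ, i ≤ 3 → L2muSq 1 t (deriv^[i] h) < ⊤) →
        ∀ k : ℕ, k ≤ 2 →
          L2muSq lam t (deriv^[k + 1] h) ^ (1 / 2 : ℝ)
            ≤ ENNReal.ofReal C *
                L2muSq lam' t
                    (deriv^[k] fun z => deriv h z + z / (2 * (1 + t)) * h z) ^ (1 / 2 : ℝ) := by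
  obtain ⟨C, hC, hbound⟩ := statement11_general 2 lam lam' hlt.le (hlam0.trans_lt hlt) hlam1
  exact ⟨C, hC, fun t ht h hh hh₀ hfin => hbound t (by linarith) h hh hh₀ fun i hi =>
    (L2muSq_mono (by linarith) hlam1 _).trans_lt (hfin i (by lia))⟩
end
end

section
/- There exists an absolute constant C > 0 such that for every 0 < r < 1 and all multi-indices α, β ∈ ℤ₊³ with β ≤ α (componentwise), one has binom(α,β) · M_{r,α} / (M_{r,β} · M_{r,α−β}) ≤ C/(|β|+1)⁴ + C/(|α|−|β|+1)⁴. -/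
/-- `|α| = α₁ + α₂ + α₃` for a multi-index `α ∈ ℤ₊³`. -/
def msize (α : ℕ × ℕ × ℕ) : ℕ := α.1 + α.2.1 + α.2.2

/-- Componentwise order on multi-indices: `β ≤ α`. -/
def mle (β α : ℕ × ℕ × ℕ) : Prop := β.1 ≤ α.1 ∧ β.2.1 ≤ α.2.1 ∧ β.2.2 ≤ α.2.2

/-- The multi-index binomial coefficient `binom(α,β) = Π binom(αᵢ,βᵢ)`. -/
def mbinom (α β : ℕ × ℕ × ℕ) : ℕ :=
  α.1.choose β.1 * α.2.1.choose β.2.1 * α.2.2.choose β.2.2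

/-- `M_{r,α} = r^{|α|}(|α|+1)⁴/|α|!`. -/
noncomputable def Mcoef (r : ℝ) (α : ℕ × ℕ × ℕ) : ℝ :=
  r ^ msize α * ((msize α : ℝ) + 1) ^ 4 / (Nat.factorial (msize α) : ℝ)

/-!
Since `M_{r,α}` depends only on `|α|`, everything is controlled by `m = |β|` and `n = |α - β|`.
Vandermonde's identity gives `binom(α,β) ≤ binom(m + n, m)`, and this binomial coefficient cancels
exactly the factorials in the quotient of weights, while the powers of `r` cancel each other. What
remains is `(m + n + 1)⁴ / ((m + 1)⁴ (n + 1)⁴)`, and convexity of `x ↦ x⁴` bounds its numerator by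
`8 ((m + 1)⁴ + (n + 1)⁴)`.
-/

open Finset

open scoped Nat

theorem choose_mul_choose_le_choose_add (a b c d : ℕ) :
    a.choose b * c.choose d ≤ (a + c).choose (b + d) := by
  rw [Nat.add_choose_eq]
  exact single_le_sum_of_canonicallyOrdered (f := fun ij : ℕ × ℕ ↦ a.choose ij.1 * c.choose ij.2)
    (mem_antidiagonal.2 rfl : (b, d) ∈ antidiagonal (b + d))

theorem prod_choose_le_choose_sum {ι : Type*} (s : Finset ι) (a b : ι → ℕ) :
    ∏ i ∈ s, (a i).choose (b i) ≤ (∑ i ∈ s, a i).choose (∑ i ∈ s, b i) := by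
  induction s using Finset.cons_induction with
  | empty => simp
  | cons i s hi ih =>
    simp only [prod_cons, sum_cons]
    exact (Nat.mul_le_mul_left _ ih).trans (choose_mul_choose_le_choose_add ..)

theorem add_pow_div_pow_mul_pow_le {K : Type*} [Field K] [LinearOrder K] [IsStrictOrderedRing K]
    {x y : K} (hx : 0 < x) (hy : 0 < y) (k : ℕ) :
    (x + y) ^ k / (x ^ k * y ^ k) ≤ 2 ^ (k - 1) / x ^ k + 2 ^ (k - 1) / y ^ k :=
  calc
    (x + y) ^ k / (x ^ k * y ^ k) ≤ 2 ^ (k - 1) * (x ^ k + y ^ k) / (x ^ k * y ^ k) := by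
      gcongr
      exact add_pow_le hx.le hy.le k
    _ = 2 ^ (k - 1) / x ^ k + 2 ^ (k - 1) / y ^ k := by
      field_simp
      ring

/-- The weight `rⁿ (n + 1)ᵏ / n!`: the coefficient `M_{r,α}` as a function of the order `n = |α|`,
with an arbitrary exponent `k` in place of `4`. -/
noncomputable def factorialWeight (r : ℝ) (k n : ℕ) : ℝ :=
  r ^ n * ((n : ℝ) + 1) ^ k / n !

theorem Mcoef_eq_factorialWeight (r : ℝ) (α : ℕ × ℕ × ℕ) :
    Mcoef r α = factorialWeight r 4 (msize α) :=
  rfl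

theorem factorialWeight_add_div {r : ℝ} (hr : r ≠ 0) (k m n : ℕ) :
    factorialWeight r k (m + n) / (factorialWeight r k m * factorialWeight r k n) =
      ((m : ℝ) + n + 1) ^ k / (((m : ℝ) + 1) ^ k * ((n : ℝ) + 1) ^ k) / (m + n).choose m := by
  rw [Nat.cast_add_choose]
  simp only [factorialWeight, pow_add, Nat.cast_add]
  field_simp

theorem mul_factorialWeight_add_div_le {r : ℝ} (hr : r ≠ 0) (k : ℕ) {m n B : ℕ}
    (hB : B ≤ (m + n).choose m) :
    B * factorialWeight r k (m + n) / (factorialWeight r k m * factorialWeight r k n) ≤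
      2 ^ (k - 1) / ((m : ℝ) + 1) ^ k + 2 ^ (k - 1) / ((n : ℝ) + 1) ^ k := by
  have hchoose : (0 : ℝ) < (m + n).choose m := by exact_mod_cast Nat.choose_pos le_self_add
  have hB_div : (B : ℝ) / (m + n).choose m ≤ 1 := (div_le_one hchoose).2 (by exact_mod_cast hB)
  calc
    B * factorialWeight r k (m + n) / (factorialWeight r k m * factorialWeight r k n)
      = B / (m + n).choose m *
          (((m : ℝ) + n + 1) ^ k / (((m : ℝ) + 1) ^ k * ((n : ℝ) + 1) ^ k)) := by
        rw [mul_div_assoc, factorialWeight_add_div hr, mul_div_left_comm, mul_comm]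
    _ ≤ ((m : ℝ) + n + 1) ^ k / (((m : ℝ) + 1) ^ k * ((n : ℝ) + 1) ^ k) :=
        mul_le_of_le_one_left (by positivity) hB_div
    _ ≤ (((m : ℝ) + 1) + ((n : ℝ) + 1)) ^ k / (((m : ℝ) + 1) ^ k * ((n : ℝ) + 1) ^ k) := by
        gcongr ?_ ^ k / _
        linarith
    _ ≤ 2 ^ (k - 1) / ((m : ℝ) + 1) ^ k + 2 ^ (k - 1) / ((n : ℝ) + 1) ^ k :=
        add_pow_div_pow_mul_pow_le (by positivity) (by positivity) k

theorem statement12_general {ι : Type*} [Fintype ι] {r : ℝ} (hr : r ≠ 0) (k : ℕ)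
    {α β : ι → ℕ} (hβα : β ≤ α) :
    ((∏ i, (α i).choose (β i) : ℕ) : ℝ) * factorialWeight r k (∑ i, α i) /
        (factorialWeight r k (∑ i, β i) * factorialWeight r k (∑ i, (α i - β i)))
      ≤ 2 ^ (k - 1) / (((∑ i, β i : ℕ) : ℝ) + 1) ^ k
        + 2 ^ (k - 1) / (((∑ i, α i : ℕ) : ℝ) - ((∑ i, β i : ℕ) : ℝ) + 1) ^ k := by
  obtain ⟨γ, rfl⟩ := exists_add_of_le hβα
  have hchoose := prod_choose_le_choose_sum univ (β + γ) β
  simp only [Pi.add_apply, sum_add_distrib] at hchoose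
  simpa only [Pi.add_apply, sum_add_distrib, add_tsub_cancel_left, Nat.cast_add]
    using mul_factorialWeight_add_div_le hr k hchoose

theorem statement12 :
    ∃ C : ℝ, 0 < C ∧
      ∀ r : ℝ, 0 < r → r < 1 →
        ∀ α β : ℕ × ℕ × ℕ, mle β α →
          (mbinom α β : ℝ) * Mcoef r α /
              (Mcoef r β * Mcoef r (α.1 - β.1, α.2.1 - β.2.1, α.2.2 - β.2.2))
            ≤ C / ((msize β : ℝ) + 1) ^ 4
              + C / ((msize α : ℝ) - (msize β : ℝ) + 1) ^ 4 := by
  refine ⟨2 ^ (4 - 1), by norm_num, fun r hr _ α β ⟨h₁, h₂, h₃⟩ ↦ ?_⟩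
  have hβα : ![β.1, β.2.1, β.2.2] ≤ ![α.1, α.2.1, α.2.2] := by
    simp [Pi.le_def, Fin.forall_fin_succ, h₁, h₂, h₃]
  simpa [mbinom, Mcoef_eq_factorialWeight, msize, Fin.sum_univ_three, Fin.prod_univ_three]
    using statement12_general hr.ne' 4 hβα
end

section
/- There exists an absolute constant C > 0 such that for every 0 < r < 1 and all multi-indices α, β ∈ ℤ₊³ with β ≤ α, α₃ ≥ 1 and β₃ = 0 (so that α − β + (0,1,−1) ∈ ℤ₊³ and |α| ≥ 1), one has binom(α,β) · |α|^{−1} M_{r,α} / (M_{r,β} · M_{r,α−β+(0,1,−1)}) ≤ C/(|β|+1)⁴ + C/(|α|−|β|+1)⁴. -/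
/-!
Write `γ = α - β + (0,1,-1)`, so that `|β| + |γ| = |α|`. The powers of `r` cancel, and by
Vandermonde `binom(α,β) ≤ binom(|α|,|β|) = |α|! / (|β|! |γ|!)`, which absorbs the factorials. What
remains is `(|α|+1)⁴ / ((|β|+1)⁴ (|γ|+1)⁴)`, and convexity of `t ↦ t⁴` bounds its numerator by
`8 ((|β|+1)⁴ + (|γ|+1)⁴)`. The factor `|α|⁻¹ ≤ 1` is simply discarded.
-/

theorem choose_mul_choose_le_add_choose_add (m i n j : ℕ) :
    m.choose i * n.choose j ≤ (m + n).choose (i + j) := by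
  rw [Nat.add_choose_eq]
  exact Finset.single_le_sum (f := fun p : ℕ × ℕ => m.choose p.1 * n.choose p.2)
    (fun _ _ => Nat.zero_le _)
    (Finset.HasAntidiagonal.mem_antidiagonal.mpr (rfl : (i, j).1 + (i, j).2 = i + j))

theorem add_add_one_pow_div_mul_pow_le {K : Type*} [Field K] [LinearOrder K]
    [IsStrictOrderedRing K] {x y : K} (hx : 0 ≤ x) (hy : 0 ≤ y) (p : ℕ) :
    (x + y + 1) ^ p / ((x + 1) ^ p * (y + 1) ^ p) ≤
      2 ^ (p - 1) / (x + 1) ^ p + 2 ^ (p - 1) / (y + 1) ^ p := by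
  have hpow : (x + y + 1) ^ p ≤ 2 ^ (p - 1) * ((x + 1) ^ p + (y + 1) ^ p) :=
    calc (x + y + 1) ^ p ≤ ((x + 1) + (y + 1)) ^ p :=
          pow_le_pow_left₀ (by positivity) (by linarith) p
      _ ≤ 2 ^ (p - 1) * ((x + 1) ^ p + (y + 1) ^ p) :=
          add_pow_le (by positivity) (by positivity) p
  calc (x + y + 1) ^ p / ((x + 1) ^ p * (y + 1) ^ p)
      ≤ 2 ^ (p - 1) * ((x + 1) ^ p + (y + 1) ^ p) / ((x + 1) ^ p * (y + 1) ^ p) := by gcongr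
    _ = 2 ^ (p - 1) / (x + 1) ^ p + 2 ^ (p - 1) / (y + 1) ^ p := by
        field_simp
        ring

theorem msize_add_msize_sub_add_single {α β : ℕ × ℕ × ℕ} (hle : mle β α) (hlt : β.2.2 < α.2.2) :
    msize β + msize (α.1 - β.1, α.2.1 - β.2.1 + 1, α.2.2 - β.2.2 - 1) = msize α := by
  obtain ⟨h₁, h₂, -⟩ := hle
  simp only [msize]
  omega

theorem mbinom_le_choose_msize (α β : ℕ × ℕ × ℕ) :
    mbinom α β ≤ (msize α).choose (msize β) :=
  calc mbinom α β ≤ (α.1 + α.2.1).choose (β.1 + β.2.1) * α.2.2.choose β.2.2 :=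
        Nat.mul_le_mul_right _ (choose_mul_choose_le_add_choose_add _ _ _ _)
    _ ≤ (msize α).choose (msize β) := choose_mul_choose_le_add_choose_add _ _ _ _

theorem Mcoef_nonneg {r : ℝ} (hr : 0 ≤ r) (α : ℕ × ℕ × ℕ) : 0 ≤ Mcoef r α := by
  unfold Mcoef
  positivity

theorem mbinom_mul_inv_msize_mul_Mcoef_div_le {r : ℝ} (hr : 0 ≤ r) (α β γ : ℕ × ℕ × ℕ) :
    (mbinom α β : ℝ) * (msize α : ℝ)⁻¹ * Mcoef r α / (Mcoef r β * Mcoef r γ) ≤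
      (mbinom α β : ℝ) * Mcoef r α / (Mcoef r β * Mcoef r γ) := by
  have hα := Mcoef_nonneg hr α
  have hβ := Mcoef_nonneg hr β
  have hγ := Mcoef_nonneg hr γ
  gcongr
  exact mul_le_of_le_one_right (Nat.cast_nonneg _) (Nat.cast_inv_le_one _)

section

variable {α β γ : ℕ × ℕ × ℕ}

theorem mbinom_mul_factorial_mul_factorial_le (h : msize β + msize γ = msize α) :
    mbinom α β * ((msize β).factorial * (msize γ).factorial) ≤ (msize α).factorial :=
  calc mbinom α β * ((msize β).factorial * (msize γ).factorial)
      ≤ (msize α).choose (msize β) * ((msize β).factorial * (msize γ).factorial) :=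
        Nat.mul_le_mul_right _ (mbinom_le_choose_msize α β)
    _ = (msize α).factorial := by
        rw [← h, Nat.choose_symm_add, ← mul_assoc, Nat.add_choose_mul_factorial_mul_factorial]

theorem Mcoef_div_Mcoef_mul_Mcoef {r : ℝ} (hr : r ≠ 0) (h : msize β + msize γ = msize α) :
    Mcoef r α / (Mcoef r β * Mcoef r γ) =
      ((msize β).factorial * (msize γ).factorial : ℝ) / (msize α).factorial *
        (((msize α : ℝ) + 1) ^ 4 / (((msize β : ℝ) + 1) ^ 4 * ((msize γ : ℝ) + 1) ^ 4)) := by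
  have hpow : r ^ msize α = r ^ msize β * r ^ msize γ := by rw [← h, pow_add]
  simp only [Mcoef, hpow]
  field_simp

theorem statement13_general {r : ℝ} (hr : r ≠ 0) (h : msize β + msize γ = msize α) :
    (mbinom α β : ℝ) * Mcoef r α / (Mcoef r β * Mcoef r γ) ≤
      8 / ((msize β : ℝ) + 1) ^ 4 + 8 / ((msize α : ℝ) - (msize β : ℝ) + 1) ^ 4 := by
  have hα : (msize α : ℝ) = msize β + msize γ := by exact_mod_cast h.symm
  have hfact : (mbinom α β : ℝ) *
      (((msize β).factorial * (msize γ).factorial : ℝ) / (msize α).factorial) ≤ 1 := by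
    rw [← mul_div_assoc, div_le_one (by positivity)]
    exact_mod_cast mbinom_mul_factorial_mul_factorial_le h
  calc (mbinom α β : ℝ) * Mcoef r α / (Mcoef r β * Mcoef r γ)
      ≤ ((msize α : ℝ) + 1) ^ 4 / (((msize β : ℝ) + 1) ^ 4 * ((msize γ : ℝ) + 1) ^ 4) := by
        rw [mul_div_assoc, Mcoef_div_Mcoef_mul_Mcoef hr h, ← mul_assoc]
        exact mul_le_of_le_one_left (by positivity) hfact
    _ ≤ 2 ^ (4 - 1) / ((msize β : ℝ) + 1) ^ 4 + 2 ^ (4 - 1) / ((msize γ : ℝ) + 1) ^ 4 := by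
        rw [hα]
        exact add_add_one_pow_div_mul_pow_le (Nat.cast_nonneg _) (Nat.cast_nonneg _) 4
    _ = 8 / ((msize β : ℝ) + 1) ^ 4 + 8 / ((msize α : ℝ) - (msize β : ℝ) + 1) ^ 4 := by
        rw [hα, add_sub_cancel_left]
        norm_num

end

theorem statement13 :
    ∃ C : ℝ, 0 < C ∧
      ∀ r : ℝ, 0 < r → r < 1 →
        ∀ α β : ℕ × ℕ × ℕ, mle β α → 1 ≤ α.2.2 → β.2.2 = 0 →
          (mbinom α β : ℝ) * ((msize α : ℝ))⁻¹ * Mcoef r α /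
              (Mcoef r β * Mcoef r (α.1 - β.1, α.2.1 - β.2.1 + 1, α.2.2 - β.2.2 - 1))
            ≤ C / ((msize β : ℝ) + 1) ^ 4
              + C / ((msize α : ℝ) - (msize β : ℝ) + 1) ^ 4 := by
  exact ⟨8, by norm_num, fun r hr _ α β hle hα hβ =>
    (mbinom_mul_inv_msize_mul_Mcoef_div_le hr.le α β _).trans
      (statement13_general hr.ne' (msize_add_msize_sub_add_single hle (hβ ▸ hα)))⟩
end
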